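/- Let $n\ge 1$ and let $G$ be a chordal simple graph on vertex set $\{1,\dots,n\}$, i.e., every cycle of $G$ of length at least $4$ has a chord. Let $\mathcal{M}_G$ be the set of real symmetric positive definite $n\times n$ matrices $K$ with $K_{ij}=0$ whenever $i\ne j$ and $ij$ is not an edge of $G$, and let $\mathrm{MLT}(G)$ be the smallest positive integer $d$ such that for Lebesgue-almost every real $n\times d$ matrix $X$, the function $K\mapsto \operatorname{tr}(XX^{T}K)-\log\det K$ attains a minimum on $\mathcal{M}_G$. Then $\mathrm{MLT}(G)$ equals the clique number of $G$ (the largest size of a set of pairwise adjacent vertices of $G$). -/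

import Mathlib

open MeasureTheory Matrix

/-- The objective function `K ↦ tr(S K) − log det K` of Gaussian maximum likelihood,
where `S` is the sample covariance matrix. -/
noncomputable def mlObjective {n : ℕ} (S K : Matrix (Fin n) (Fin n) ℝ) : ℝ :=
  (S * K).trace - Real.log K.det

/-- The maximum likelihood threshold of a set `M` of positive definite matrices:
the smallest positive integer `d` such that for Lebesgue-almost every real `n × d`
matrix `X`, the function `K ↦ tr(X Xᵀ K) − log det K` attains a minimum on `M`.
(It is `0` if there is no such `d`.) -/
noncomputable def mlt (n : ℕ) (M : Set (Matrix (Fin n) (Fin n) ℝ)) : ℕ :=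
  sInf {d : ℕ | 0 < d ∧
    ∀ᵐ X : Fin n → Fin d → ℝ ∂volume,
      ∃ K ∈ M, ∀ K' ∈ M,
        mlObjective (Matrix.of X * (Matrix.of X)ᵀ) K ≤
          mlObjective (Matrix.of X * (Matrix.of X)ᵀ) K'}

/-- The Gaussian graphical model of a graph `G` on `n` vertices: all symmetric positive
definite matrices whose off-diagonal entries vanish at non-edges of `G`. -/
def graphModel (n : ℕ) (G : SimpleGraph (Fin n)) : Set (Matrix (Fin n) (Fin n) ℝ) :=
  {K | K.PosDef ∧ ∀ i j, i ≠ j → ¬ G.Adj i j → K i j = 0}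

/-- A graph is chordal if every cycle of length at least four has a chord: an edge of
the graph between two vertices of the cycle that is not an edge of the cycle. -/
def IsChordal {V : Type*} (G : SimpleGraph V) : Prop :=
  ∀ (v : V) (c : G.Walk v v), c.IsCycle → 4 ≤ c.length →
    ∃ i j, i ∈ c.support ∧ j ∈ c.support ∧ G.Adj i j ∧ s(i, j) ∉ c.edges

/-!
A simplicial vertex `v` can be eliminated from a matrix of the model without fill-in. So if `G` is
chordal, successive eliminations of simplicial vertices identify the model with a product of spaces
of Cholesky columns, one for each vertex `v`, supported on the clique formed by `v` and its
neighbours not yet eliminated. In these coordinates the objective is a sum of functions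
`b ↦ bᵀ X Xᵀ b - log (b_v ^ 2)` of single columns. Each of them attains a minimum if the rows of
`X` indexed by the clique are linearly independent, while a linear relation `aᵀ X = 0` supported
on a clique excludes a minimum: adding `a aᵀ` to `K` increases `det K` and leaves the trace
unchanged. For almost every `X` all these rows are independent if no clique has more than `d`
vertices, and a clique with more than `d` vertices always carries a relation.
-/

section Chordal

open SimpleGraph

variable {V : Type*} {G : SimpleGraph V}

lemma isChordless_of_length_eq_dist {x y : V} {p : G.Walk x y} (hp : p.length = G.dist x y) :
    p.IsChordless := by
  have adj_mem_edges : ∀ a b, a < b → b ≤ p.length → G.Adj (p.getVert a) (p.getVert b) →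
      s(p.getVert a, p.getVert b) ∈ p.edges := by
    intro a b hab hb h
    have hshortcut := G.dist_le ((p.take a).append (.cons h (p.drop b)))
    simp only [← hp, Walk.length_append, Walk.length_cons, Walk.take_length,
      Walk.drop_length] at hshortcut
    obtain rfl : b = a + 1 := by omega
    exact (Walk.mk_mem_edges_iff_exists _).2 ⟨a, by omega, rfl⟩
  rw [Walk.isChordless_iff_forall_mem_edges]
  intro i j hi hj hij
  obtain ⟨a, rfl, ha⟩ := Walk.mem_support_iff_exists_getVert.1 hi
  obtain ⟨b, rfl, hb⟩ := Walk.mem_support_iff_exists_getVert.1 hj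
  rcases lt_trichotomy a b with hab | rfl | hba
  · exact adj_mem_edges a b hab hb hij
  · exact absurd rfl hij.ne
  · exact Sym2.eq_swap ▸ adj_mem_edges b a hba ha hij.symm

lemma isChordless_map_embedding {V' : Type*} {G' : SimpleGraph V'} (f : G ↪g G') {x y : V}
    {p : G.Walk x y} (hp : p.IsChordless) : (p.map f.toHom).IsChordless := by
  rw [Walk.isChordless_iff_forall_mem_edges]
  simp only [Walk.support_map, Walk.edges_map, List.mem_map]
  rintro _ _ ⟨i, hi, rfl⟩ ⟨j, hj, rfl⟩ hij
  exact ⟨s(i, j), hp.mem_edges hi hj (f.map_adj_iff.1 hij), rfl⟩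

lemma exists_isChordless_isPath_of_reachable_induce {W : Set V} {x y : W}
    (h : (G.induce W).Reachable x y) :
    ∃ p : G.Walk x y, p.IsPath ∧ p.IsChordless ∧ ∀ z ∈ p.support, z ∈ W := by
  obtain ⟨p, hpath, hdist⟩ := h.exists_path_of_dist
  refine ⟨p.map (Embedding.induce W).toHom, hpath.map Subtype.val_injective,
    isChordless_map_embedding _ (isChordless_of_length_eq_dist hdist), fun z hz => ?_⟩
  obtain ⟨i, -, rfl⟩ := List.mem_map.1 (Walk.support_map (Embedding.induce W).toHom p ▸ hz)
  exact i.2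

lemma isCycle_cons_concat {u x y : V} {p : G.Walk x y} (hp : p.IsPath) (hux : G.Adj u x)
    (hyu : G.Adj y u) (hxy : x ≠ y) (hu : u ∉ p.support) :
    (Walk.cons hux (p.concat hyu)).IsCycle := by
  refine (Walk.cons_isCycle_iff _ _).2 ⟨hp.concat hu hyu, ?_⟩
  rw [Walk.edges_concat, List.concat_eq_append, List.mem_append, List.mem_singleton, Sym2.eq_iff]
  rintro (hmem | ⟨rfl, -⟩ | ⟨-, rfl⟩)
  · exact hu (p.fst_mem_support_of_mem_edges hmem)
  · exact hyu.ne rfl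
  · exact hxy rfl

lemma isChordless_cons_concat {u x y : V} {p : G.Walk x y} (hp : p.IsChordless)
    (hux : G.Adj u x) (hyu : G.Adj y u)
    (hnbr : ∀ z ∈ p.support, G.Adj u z → z = x ∨ z = y) :
    (Walk.cons hux (p.concat hyu)).IsChordless := by
  rw [Walk.isChordless_iff_forall_mem_edges]
  simp only [Walk.support_cons, Walk.support_concat, Walk.edges_cons, Walk.edges_concat,
    List.concat_eq_append, List.mem_cons, List.mem_append, List.not_mem_nil, or_false]
  have spoke : ∀ z ∈ p.support, G.Adj u z → s(u, z) = s(u, x) ∨ s(u, z) = s(y, u) := by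
    intro z hz huz
    rcases hnbr z hz huz with rfl | rfl
    · exact .inl rfl
    · exact .inr Sym2.eq_swap
  have mem_edges : ∀ i ∈ p.support, ∀ j ∈ p.support, G.Adj i j → s(i, j) ∈ p.edges :=
    fun i hi j hj => hp.mem_edges hi hj
  intro i j hi hj hij
  grind [Sym2.eq_swap, SimpleGraph.irrefl, SimpleGraph.Adj.symm]

lemma IsChordal.adj_of_isChordless (hG : IsChordal G) {u x y : V} {p : G.Walk x y}
    (hpath : p.IsPath) (hp : p.IsChordless) (hux : G.Adj u x) (huy : G.Adj u y) (hxy : x ≠ y)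
    (hu : u ∉ p.support) (hnbr : ∀ z ∈ p.support, G.Adj u z → z = x ∨ z = y) : G.Adj x y := by
  by_contra hnadj
  have hlen : 2 ≤ p.length := by
    have h0 : p.length ≠ 0 := fun h => hxy (Walk.eq_of_length_eq_zero h)
    have h1 : p.length ≠ 1 := fun h => hnadj (Walk.adj_of_length_eq_one h)
    omega
  obtain ⟨i, j, hi, hj, hij, hchord⟩ :=
    hG u _ (isCycle_cons_concat hpath hux huy.symm hxy hu) (by simpa using hlen)
  exact hchord ((isChordless_cons_concat hp hux huy.symm hnbr).mem_edges hi hj hij)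

lemma IsChordal.isClique_common_neighbors (hG : IsChordal G) {u : V} {C : Set V}
    (hC : (G.induce C).Preconnected) (hu : ∀ c ∈ C, Gᶜ.Adj u c) :
    G.IsClique {a | G.Adj u a ∧ ∃ c ∈ C, G.Adj a c} := by
  rintro x ⟨hux, c, hc, hxc⟩ y ⟨huy, c', hc', hyc'⟩ hxy
  let W : Set V := insert x (insert y C)
  have hCW : C ⊆ W := fun z hz => .inr (.inr hz)
  have hxy_reach : (G.induce W).Reachable ⟨x, .inl rfl⟩ ⟨y, .inr (.inl rfl)⟩ := by
    have hcc' : (G.induce W).Reachable ⟨c, hCW hc⟩ ⟨c', hCW hc'⟩ :=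
      (hC ⟨c, hc⟩ ⟨c', hc'⟩).map (induceHomOfLE G hCW).toHom
    exact (Adj.reachable (by exact hxc)).trans (hcc'.trans (Adj.reachable (by exact hyc'.symm)))
  obtain ⟨p, hpath, hp, hpW⟩ := exists_isChordless_isPath_of_reachable_induce hxy_reach
  refine hG.adj_of_isChordless hpath hp hux huy hxy (fun hup => ?_) fun z hz huz => ?_
  · rcases hpW u hup with rfl | rfl | huC
    exacts [hux.ne rfl, huy.ne rfl, (hu u huC).ne rfl]
  · rcases hpW z hz with rfl | rfl | hzC
    exacts [.inl rfl, .inr rfl, absurd huz (compl_adj _ _ _ |>.1 (hu z hzC)).2]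

lemma exists_connected_induce_subset (G : SimpleGraph V) {T : Set V} {w : V} (hw : w ∈ T) :
    ∃ C ⊆ T, w ∈ C ∧ (G.induce C).Connected ∧ ∀ c ∈ C, ∀ t ∈ T, G.Adj c t → t ∈ C := by
  classical
  let C : Set V := {t | ∃ p : G.Walk w t, ∀ z ∈ p.support, z ∈ T}
  have hwC : w ∈ C := ⟨.nil, by simpa using hw⟩
  refine ⟨C, fun t ⟨p, hp⟩ => hp t p.end_mem_support, hwC,
    induce_connected_of_patches w hwC ?_, fun c ⟨p, hp⟩ t ht hct => ?_⟩
  · rintro t ⟨p, hp⟩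
    exact ⟨{z | z ∈ p.support},
      fun z hz => ⟨p.takeUntil z hz, fun y hy => hp y (p.support_takeUntil_subset_support hz hy)⟩,
      p.start_mem_support, p.end_mem_support, p.connected_induce_support _ _⟩
  · refine ⟨p.concat hct, fun z hz => ?_⟩
    rw [Walk.support_concat, List.mem_append, List.mem_singleton] at hz
    rcases hz with hz | rfl
    exacts [hp z hz, ht]

/-- `v` is a simplicial vertex of the subgraph of `G` induced on `s` (adding `v` to `s` if
necessary): its neighbours in `s` form a clique. -/
def IsSimplicialIn (G : SimpleGraph V) (s : Set V) (v : V) : Prop :=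
  G.IsClique (s ∩ G.neighborSet v)

lemma IsSimplicialIn.isClique_insert {s : Set V} {v : V} (h : IsSimplicialIn G s v) :
    G.IsClique (insert v (s ∩ G.neighborSet v)) :=
  SimpleGraph.isClique_insert.2 ⟨h, fun _ hx _ => hx.2⟩

lemma exists_isSimplicialIn_diff_isClique {s A : Set V} (hA : G.IsClique A)
    (hsA : (s \ A).Nonempty)
    (hs : ∀ u ∈ s, ∀ w ∈ s, Gᶜ.Adj u w → ∃ w' ∈ s, Gᶜ.Adj u w' ∧ IsSimplicialIn G s w') :
    ∃ w ∈ s \ A, IsSimplicialIn G s w := by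
  by_cases hclique : G.IsClique s
  · obtain ⟨w, hw⟩ := hsA
    exact ⟨w, hw, hclique.subset Set.inter_subset_left⟩
  have of_mem_A : ∀ a ∈ s ∩ A, ∀ w ∈ s, Gᶜ.Adj a w → ∃ w ∈ s \ A, IsSimplicialIn G s w := by
    rintro a ⟨has, haA⟩ w hw haw
    obtain ⟨w', hw', haw', hsimp⟩ := hs a has w hw haw
    rw [compl_adj] at haw'
    exact ⟨w', ⟨hw', fun hw'A => haw'.2 (hA haA hw'A haw'.1)⟩, hsimp⟩
  obtain ⟨x, hx, y, hy, hxy⟩ : ∃ x ∈ s, ∃ y ∈ s, Gᶜ.Adj x y := by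
    simpa [isClique_iff, Set.Pairwise] using hclique
  obtain ⟨w, hw, hxw, hsimp⟩ := hs x hx y hy hxy
  by_cases hwA : w ∈ A
  · exact of_mem_A w ⟨hw, hwA⟩ x hx hxw.symm
  · exact ⟨w, ⟨hw, hwA⟩, hsimp⟩

lemma IsChordal.exists_isSimplicialIn_not_adj (hG : IsChordal G) {s : Set V} (hs : s.Finite)
    {u w : V} (hu : u ∈ s) (hw : w ∈ s) (huw : Gᶜ.Adj u w) :
    ∃ w' ∈ s, Gᶜ.Adj u w' ∧ IsSimplicialIn G s w' := by
  induction h : s.ncard using Nat.strong_induction_on generalizing s u w with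
  | _ k ih =>
  obtain ⟨C, hCT, hwC, hconn, hclosed⟩ :=
    exists_connected_induce_subset G (T := s ∩ Gᶜ.neighborSet u) ⟨hw, huw⟩
  let A : Set V := {a | G.Adj u a ∧ ∃ c ∈ C, G.Adj a c}
  have hA : G.IsClique A := hG.isClique_common_neighbors hconn.preconnected fun c hc => (hCT hc).2
  have huC : u ∉ C := fun huC => Gᶜ.loopless.irrefl u (hCT huC).2
  have nbr_mem : ∀ c ∈ C, ∀ t ∈ s, G.Adj c t → t ∈ C ∪ A := by
    intro c hc t ht hct
    by_cases hut : G.Adj u t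
    · exact .inr ⟨hut, c, hc, hct.symm⟩
    · refine .inl (hclosed c hc t ⟨ht, (compl_adj _ _ _).2 ⟨?_, hut⟩⟩ hct)
      rintro rfl
      exact ((compl_adj _ _ _).1 (hCT hc).2).2 hct.symm
  have hssub : s ∩ (C ∪ A) ⊂ s :=
    Set.inter_subset_left.ssubset_of_mem_notMem hu fun ⟨_, hmem⟩ =>
      hmem.elim huC fun huA => huA.1.ne rfl
  have hne : ((s ∩ (C ∪ A)) \ A).Nonempty :=
    ⟨w, ⟨hw, .inl hwC⟩, fun hwA => ((compl_adj _ _ _).1 huw).2 hwA.1⟩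
  obtain ⟨w', ⟨⟨hw's, hw'CA⟩, hw'A⟩, hsimp⟩ :=
    exists_isSimplicialIn_diff_isClique hA hne fun x hx y hy hxy =>
      ih _ (h ▸ Set.ncard_lt_ncard hssub hs) (hs.subset hssub.subset) hx hy hxy rfl
  have hw'C : w' ∈ C := hw'CA.resolve_right hw'A
  have hnbr : s ∩ G.neighborSet w' ⊆ s ∩ (C ∪ A) ∩ G.neighborSet w' :=
    fun x hx => ⟨⟨hx.1, nbr_mem w' hw'C x hx.1 hx.2⟩, hx.2⟩
  exact ⟨w', hw's, (hCT hw'C).2, hsimp.subset hnbr⟩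

theorem IsChordal.exists_isSimplicialIn (hG : IsChordal G) {s : Set V} (hs : s.Finite)
    (hne : s.Nonempty) : ∃ v ∈ s, IsSimplicialIn G s v := by
  simpa using exists_isSimplicialIn_diff_isClique (A := ∅) (by simp) (by simpa using hne)
    fun u hu w hw huw => hG.exists_isSimplicialIn_not_adj hs hu hw huw

end Chordal

section LinearIndependence

lemma linearIndepOn_row_iff_vecMul {R V κ : Type*} [Ring R] [Fintype V] {X : Matrix V κ R}
    {C : Set V} :
    LinearIndepOn R X.row C ↔ ∀ a : V → R, Function.support a ⊆ C → a ᵥ* X = 0 → a = 0 := by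
  classical
  simp_rw [vecMul_eq_sum, linearIndepOn_iff'']
  constructor
  · intro h a ha hsum
    have a_eq_zero : ∀ i ∉ C, a i = 0 := fun i hi => Function.notMem_support.1 fun h => hi (ha h)
    funext i
    by_cases hi : i ∈ C
    · refine h C.toFinset a (by simp) (fun j hj => a_eq_zero j (by simpa using hj)) ?_ i (by simpa)
      rwa [Finset.sum_subset (Finset.subset_univ _) fun j _ hj => ?_]
      rw [a_eq_zero j (by simpa using hj), zero_smul]
    · exact a_eq_zero i hi
  · intro h t g htC hg hsum i _
    refine congrFun (h g (fun j hj => htC (by_contra fun hjt => hj (hg j hjt))) ?_) i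
    rwa [← Finset.sum_subset (Finset.subset_univ t) fun j _ hj => ?_]
    rw [hg j hj, zero_smul]

variable {E : Type*} [NormedAddCommGroup E] [NormedSpace ℝ E] [MeasurableSpace E] [BorelSpace E]
  [FiniteDimensional ℝ E] (μ : Measure E) [μ.IsAddHaarMeasure]

lemma ae_linearIndependent_fin {k : ℕ} (hk : k ≤ Module.finrank ℝ E) :
    ∀ᵐ f : Fin k → E ∂Measure.pi fun _ => μ, LinearIndependent ℝ f := by
  induction k with
  | zero => exact .of_forall fun f => linearIndependent_empty_type
  | succ k ih =>
  have ae_notMem_span : ∀ f : Fin k → E, ∀ᵐ x ∂μ, x ∉ Submodule.span ℝ (Set.range f) := by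
    intro f
    refine measure_eq_zero_iff_ae_notMem.1 (Measure.addHaar_submodule μ _ fun htop => ?_)
    have hle := finrank_range_le_card (R := ℝ) f
    rw [Set.finrank, htop, finrank_top, Fintype.card_fin] at hle
    omega
  let e := (MeasurableEquiv.piFinSuccAbove (fun _ : Fin (k + 1) => E) 0).symm
  have he : MeasurePreserving (fun z : (Fin k → E) × E => e z.swap)
      ((Measure.pi fun _ => μ).prod μ) (Measure.pi fun _ => μ) :=
    (measurePreserving_piFinSuccAbove (fun _ => μ) 0).symm.comp Measure.measurePreserving_swap
  have hmeas : MeasurableSet {f : Fin (k + 1) → E | LinearIndependent ℝ f} :=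
    isOpen_setOfPred_linearIndependent.measurableSet
  rw [← he.map_eq, ae_map_iff he.measurable.aemeasurable hmeas,
    Measure.ae_prod_iff_ae_ae (p := fun z => LinearIndependent ℝ (e z.swap)) (he.measurable hmeas)]
  filter_upwards [ih (by omega)] with f hf
  filter_upwards [ae_notMem_span f] with x hx
  have heq : e (x, f) = Fin.cons x f := Fin.insertNth_zero' x f
  exact heq ▸ linearIndependent_finCons.2 ⟨hf, hx⟩

lemma ae_linearIndependent {ι : Type*} {_ : Fintype ι}
    (hι : Fintype.card ι ≤ Module.finrank ℝ E) :
    ∀ᵐ X : ι → E ∂Measure.pi fun _ => μ, LinearIndependent ℝ X := by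
  have hreindex := measurePreserving_arrowCongr' (fun _ => μ) (fun _ => μ) (Fintype.equivFin ι)
    (.refl E) fun _ => .id μ
  filter_upwards [hreindex.quasiMeasurePreserving.ae (ae_linearIndependent_fin μ hι)] with X hX
  exact (linearIndependent_equiv (Fintype.equivFin ι).symm).1 hX

lemma ae_linearIndepOn {ι : Type*} [Fintype ι] (s : Finset ι)
    (hs : s.card ≤ Module.finrank ℝ E) :
    ∀ᵐ X : ι → E ∂Measure.pi fun _ => μ, LinearIndepOn ℝ X s := by
  classical
  have hrestrict := Measure.quasiMeasurePreserving_fst.comp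
    (measurePreserving_piEquivPiSubtypeProd (fun _ : ι => μ) (· ∈ s)).quasiMeasurePreserving
  exact hrestrict.ae (ae_linearIndependent μ (by simpa using hs))

lemma ae_forall_isClique_linearIndepOn_iff {V : Type*} [Fintype V] (G : SimpleGraph V) :
    (∀ᵐ X : V → E ∂Measure.pi fun _ => μ, ∀ C : Finset V, G.IsClique C → LinearIndepOn ℝ X C) ↔
      G.cliqueNum ≤ Module.finrank ℝ E := by
  constructor
  · intro h
    obtain ⟨C, hC⟩ := G.exists_isNClique_cliqueNum
    obtain ⟨X, hX⟩ := h.exists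
    simpa [hC.card_eq] using (hX C hC.isClique).fintype_card_le_finrank
  · intro h
    exact ae_all_iff.2 fun C => Filter.eventually_imp_distrib_left.2 fun hC =>
      ae_linearIndepOn μ C (hC.card_le_cliqueNum.trans h)

end LinearIndependence

section RankOne

variable {m : Type*}

lemma vecMulVec_self_eq_zero_of_isClique {R : Type*} [MulZeroClass R] {G : SimpleGraph m}
    {a : m → R} (ha : G.IsClique (Function.support a)) {i j : m} (hij : i ≠ j)
    (hadj : ¬ G.Adj i j) : vecMulVec a a i j = 0 := by
  by_contra h
  rw [vecMulVec_apply] at h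
  exact hadj (ha (left_ne_zero_of_mul h) (right_ne_zero_of_mul h) hij)

lemma trace_mul_vecMulVec [Fintype m] {R : Type*} [CommSemiring R] (S : Matrix m m R)
    (a b : m → R) : (S * vecMulVec a b).trace = b ⬝ᵥ S *ᵥ a := by
  rw [mul_vecMulVec, trace_vecMulVec, dotProduct_comm]

lemma det_lt_det_add_vecMulVec_self [Fintype m] [DecidableEq m] {K : Matrix m m ℝ}
    (hK : K.PosDef) {a : m → ℝ} (ha : a ≠ 0) :
    K.det < (K + vecMulVec a a).det := by
  have hpos : 0 < a ⬝ᵥ K⁻¹ *ᵥ a := by simpa using hK.inv.dotProduct_mulVec_pos ha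
  rw [vecMulVec_eq Unit, det_add_replicateCol_mul_replicateRow hK.det_pos.ne'.isUnit]
  refine lt_mul_of_one_lt_right hK.det_pos ?_
  rw [← replicateRow_vecMul, det_unique, Matrix.add_apply, one_apply_eq,
    replicateRow_mul_replicateCol_apply, ← dotProduct_mulVec]
  linarith

end RankOne

section Pivot

variable {m : Type*}

/-- Replaces the pivot `v` of `K`: removes the rank one term `e_v e_vᵀ` and adds `b bᵀ`, where
`e_v` is the `v`-th unit vector. When the `v`-th row of `K` is `e_vᵀ` this inverts one step of
symmetric Gaussian elimination, `b` being the column of the Cholesky factor at `v`. -/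
def addPivot {R : Type*} [DecidableEq m] [Ring R] (v : m) (b : m → R) (K : Matrix m m R) :
    Matrix m m R :=
  K - vecMulVec (Pi.single v 1) (Pi.single v 1) + vecMulVec b b

section Ring

variable [DecidableEq m] {R : Type*} [Ring R] {v : m} {b : m → R} {K : Matrix m m R}

lemma addPivot_apply_of_isClique {G : SimpleGraph m} (hb : G.IsClique (Function.support b))
    {i j : m} (hij : i ≠ j) (hadj : ¬ G.Adj i j) : addPivot v b K i j = K i j := by
  have hsingle : G.IsClique (Function.support (Pi.single v (1 : R))) :=
    (SimpleGraph.isClique_singleton v).subset Pi.support_single_subset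
  simp [addPivot, vecMulVec_self_eq_zero_of_isClique hb hij hadj,
    vecMulVec_self_eq_zero_of_isClique hsingle hij hadj]

lemma addPivot_row_of_apply_eq_zero {i : m} (hi : i ≠ v) (hb : b i = 0) :
    (addPivot v b K).row i = K.row i := by
  funext j
  simp [addPivot, vecMulVec_apply, hi, hb]

end Ring

section CommRing

variable [Fintype m] [DecidableEq m] {R : Type*} [CommRing R]

/-- The identity matrix with its `v`-th column replaced by `b`, by which one conjugates to realise
`addPivot v b`. -/
def pivotMatrix (v : m) (b : m → R) : Matrix m m R :=
  1 + vecMulVec (b - Pi.single v 1) (Pi.single v 1)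

lemma det_pivotMatrix (v : m) (b : m → R) : (pivotMatrix v b).det = b v := by
  rw [pivotMatrix, vecMulVec_eq Unit, det_one_add_replicateCol_mul_replicateRow]
  simp

lemma pivotMatrix_mul_mul_transpose {v : m} (b : m → R) {K : Matrix m m R} (hK : K.IsSymm)
    (hv : K.row v = Pi.single v 1) :
    pivotMatrix v b * K * (pivotMatrix v b)ᵀ = addPivot v b K := by
  have hrow : Pi.single v 1 ᵥ* K = Pi.single v 1 := by rw [single_one_vecMul, hv]
  have hcol : K *ᵥ Pi.single v 1 = Pi.single v 1 := by
    rw [← vecMul_transpose, hK.eq, hrow]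
  rw [pivotMatrix, addPivot, transpose_add, transpose_one, transpose_vecMulVec, add_mul, one_mul,
    vecMulVec_mul, hrow, mul_add, mul_one, add_mul, mul_vecMulVec, hcol, vecMulVec_mul_vecMulVec,
    single_one_dotProduct, Pi.single_eq_same, one_smul]
  simp only [sub_vecMulVec, vecMulVec_sub]
  abel

lemma det_addPivot {v : m} (b : m → R) {K : Matrix m m R} (hK : K.IsSymm)
    (hv : K.row v = Pi.single v 1) : (addPivot v b K).det = b v ^ 2 * K.det := by
  rw [← pivotMatrix_mul_mul_transpose b hK hv, det_mul, det_mul, det_transpose, det_pivotMatrix]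
  ring

end CommRing

variable [Finite m] [DecidableEq m] {v : m} {b : m → ℝ} {K : Matrix m m ℝ}

lemma posDef_addPivot_iff (hb : b v ≠ 0) (hK : K.IsSymm) (hv : K.row v = Pi.single v 1) :
    (addPivot v b K).PosDef ↔ K.PosDef := by
  cases nonempty_fintype m
  have hunit : IsUnit (pivotMatrix v b) := by
    rw [isUnit_iff_isUnit_det, det_pivotMatrix]
    exact hb.isUnit
  rw [← pivotMatrix_mul_mul_transpose b hK hv, ← conjTranspose_eq_transpose_of_trivial,
    ← star_eq_conjTranspose, hunit.posDef_star_right_conjugate_iff]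

lemma exists_eq_addPivot (hK : K.PosDef) (v : m) :
    ∃ K₀ : Matrix m m ℝ, K₀.PosDef ∧ K₀.row v = Pi.single v 1 ∧
      K = addPivot v ((√(K v v))⁻¹ • K.row v) K₀ := by
  let b : m → ℝ := (√(K v v))⁻¹ • K.row v
  let K₀ := K - vecMulVec b b + vecMulVec (Pi.single v 1) (Pi.single v 1)
  have hvv : 0 < √(K v v) := Real.sqrt_pos.2 hK.diag_pos
  have hbv : b v = √(K v v) := by
    simp [b, inv_mul_eq_div, Real.div_sqrt]
  have hrow : K₀.row v = Pi.single v 1 := by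
    funext j
    have hbb : b v * b j = K v j := by
      rw [hbv]
      exact mul_inv_cancel_left₀ hvv.ne' _
    simp [K₀, vecMulVec_apply, hbb]
  have hsymm : K₀.IsSymm := by
    simp [IsSymm, K₀, transpose_vecMulVec, (isHermitian_iff_isSymm.1 hK.isHermitian).eq]
  have heq : K = addPivot v b K₀ := by
    simp [addPivot, K₀]
  exact ⟨K₀, (posDef_addPivot_iff (hbv ▸ hvv.ne') hsymm hrow).1 (heq ▸ hK), hrow, heq⟩

end Pivot

section PivotProblem

variable {m : Type*}

/-- The columns `b` by which a pivot at `v` may be replaced (see `addPivot`) if the new entries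
are to be confined to the rows and columns in `C`. -/
def pivotColumns (C : Set m) (v : m) : Set (m → ℝ) :=
  {b | b v ≠ 0 ∧ Function.support b ⊆ C}

variable [Fintype m]

/-- The contribution of a pivot at `v` with column `b` to the likelihood objective for the sample
covariance matrix `S`. -/
noncomputable def pivotObjective (S : Matrix m m ℝ) (v : m) (b : m → ℝ) : ℝ :=
  b ⬝ᵥ S *ᵥ b - Real.log (b v ^ 2)

lemma smul_dotProduct_mulVec_smul {R : Type*} [CommRing R] (S : Matrix m m R) (t : R)
    (a : m → R) : (t • a) ⬝ᵥ S *ᵥ (t • a) = t ^ 2 * (a ⬝ᵥ S *ᵥ a) := by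
  rw [mulVec_smul, smul_dotProduct, dotProduct_smul, smul_smul, smul_eq_mul, sq]

lemma pivotObjective_smul {S : Matrix m m ℝ} {v : m} {a : m → ℝ} (ha : a v = 1) (t : ℝ) :
    pivotObjective S v (t • a) = t ^ 2 * (a ⬝ᵥ S *ᵥ a) - Real.log (t ^ 2) := by
  rw [pivotObjective, smul_dotProduct_mulVec_smul, Pi.smul_apply, ha, smul_eq_mul, mul_one]

lemma isMinOn_pivotObjective_smul {S : Matrix m m ℝ} {C : Set m} {v : m} {a : m → ℝ}
    (ha : a v = 1) (hpos : 0 < a ⬝ᵥ S *ᵥ a)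
    (hmin : IsMinOn (fun a => a ⬝ᵥ S *ᵥ a) {a | a v = 1 ∧ Function.support a ⊆ C} a) :
    IsMinOn (pivotObjective S v) (pivotColumns C v) ((√(a ⬝ᵥ S *ᵥ a))⁻¹ • a) := by
  set c := a ⬝ᵥ S *ᵥ a with hc
  rintro b ⟨hbv, hbC⟩
  obtain ⟨a', ha', hb⟩ : ∃ a' : m → ℝ, a' v = 1 ∧ b = b v • a' :=
    ⟨(b v)⁻¹ • b, by simp [hbv], by simp [smul_smul, hbv]⟩
  have ha'C : Function.support a' ⊆ C := by
    rwa [hb, Function.support_const_smul_of_ne_zero _ _ hbv] at hbC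
  have hsq : 0 < b v ^ 2 := by positivity
  have hlog : Real.log (b v ^ 2) + Real.log c ≤ b v ^ 2 * c - 1 := by
    rw [← Real.log_mul hsq.ne' hpos.ne']
    exact Real.log_le_sub_one_of_pos (by positivity)
  have hle : c ≤ a' ⬝ᵥ S *ᵥ a' := hmin ⟨ha', ha'C⟩
  change pivotObjective S v _ ≤ pivotObjective S v b
  calc pivotObjective S v ((√c)⁻¹ • a)
      = 1 + Real.log c := by
        rw [pivotObjective_smul ha, ← hc, inv_pow, Real.sq_sqrt hpos.le, Real.log_inv,
          inv_mul_cancel₀ hpos.ne', sub_neg_eq_add]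
    _ ≤ b v ^ 2 * c - Real.log (b v ^ 2) := by linarith
    _ ≤ b v ^ 2 * (a' ⬝ᵥ S *ᵥ a') - Real.log (b v ^ 2) := by gcongr
    _ = pivotObjective S v b := by rw [← pivotObjective_smul ha', ← hb]

lemma exists_forall_norm_map_add_le {E F : Type*} [AddCommGroup E] [Module ℝ E]
    [NormedAddCommGroup F] [NormedSpace ℝ F] [FiniteDimensional ℝ F] (T : E →ₗ[ℝ] F) (x : E)
    (W : Submodule ℝ E) : ∃ w ∈ W, ∀ w' ∈ W, ‖T (x + w)‖ ≤ ‖T (x + w')‖ := by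
  obtain ⟨_, ⟨w, hw, rfl⟩, hdist⟩ :=
    (W.map T).closed_of_finiteDimensional.exists_infDist_eq_dist (W.map T).nonempty (-T x)
  have dist_eq : ∀ w, dist (-T x) (T w) = ‖T (x + w)‖ := by
    intro w
    rw [dist_comm, dist_eq_norm, sub_neg_eq_add, add_comm, map_add]
  refine ⟨w, hw, fun w' hw' => ?_⟩
  rw [← dist_eq, ← dist_eq, ← hdist]
  exact Metric.infDist_le_dist_of_mem ⟨w', hw', rfl⟩

variable {κ : Type*} [Fintype κ]

lemma dotProduct_mul_transpose_mulVec (X : Matrix m κ ℝ) (a : m → ℝ) :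
    a ⬝ᵥ (X * Xᵀ) *ᵥ a = ‖WithLp.toLp 2 (a ᵥ* X)‖ ^ 2 := by
  rw [← mulVec_mulVec, dotProduct_mulVec, mulVec_transpose, EuclideanSpace.real_norm_sq_eq]
  simp [dotProduct, sq]

lemma exists_isMinOn_dotProduct_mul_transpose_mulVec (X : Matrix m κ ℝ) {C : Set m} {v : m}
    (hv : v ∈ C) : ∃ a : m → ℝ, a v = 1 ∧ Function.support a ⊆ C ∧
      IsMinOn (fun a => a ⬝ᵥ (X * Xᵀ) *ᵥ a) {a | a v = 1 ∧ Function.support a ⊆ C} a := by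
  classical
  let T : (m → ℝ) →ₗ[ℝ] EuclideanSpace ℝ κ :=
    (WithLp.linearEquiv 2 ℝ (κ → ℝ)).symm.toLinearMap ∘ₗ X.vecMulLinear
  let W : Submodule ℝ (m → ℝ) := Submodule.pi (insert v Cᶜ) fun _ => ⊥
  have sub_mem_iff : ∀ a : m → ℝ, a - Pi.single v 1 ∈ W ↔ a v = 1 ∧ Function.support a ⊆ C := by
    intro a
    have single_eq_zero : ∀ i ∉ C, (Pi.single v 1 : m → ℝ) i = 0 := fun i hi =>
      Pi.single_eq_of_ne (ne_of_mem_of_not_mem hv hi).symm _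
    rw [Function.support_subset_iff']
    simp +contextual [W, Submodule.mem_pi, sub_eq_zero, single_eq_zero]
  obtain ⟨w, hw, hmin⟩ := exists_forall_norm_map_add_le T (Pi.single v 1) W
  obtain ⟨ha, haC⟩ := (sub_mem_iff (Pi.single v 1 + w)).1 (by simpa using hw)
  refine ⟨Pi.single v 1 + w, ha, haC, fun a' ha' => ?_⟩
  have hle := hmin _ ((sub_mem_iff a').2 ha')
  rw [add_sub_cancel] at hle
  simp only [Set.mem_ofPred_eq, dotProduct_mul_transpose_mulVec]
  gcongr
  exact hle

lemma exists_isMinOn_pivotObjective {X : Matrix m κ ℝ} {C : Set m} {v : m}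
    (hX : LinearIndepOn ℝ X.row C) (hv : v ∈ C) :
    ∃ b ∈ pivotColumns C v, IsMinOn (pivotObjective (X * Xᵀ) v) (pivotColumns C v) b := by
  obtain ⟨a, ha, haC, hmin⟩ := exists_isMinOn_dotProduct_mul_transpose_mulVec X hv
  have hpos : 0 < a ⬝ᵥ (X * Xᵀ) *ᵥ a := by
    have haX : a ᵥ* X ≠ 0 := by
      intro h
      simp [linearIndepOn_row_iff_vecMul.1 hX a haC h] at ha
    have : WithLp.toLp 2 (a ᵥ* X) ≠ 0 := by simpa using haX
    rw [dotProduct_mul_transpose_mulVec]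
    positivity
  refine ⟨_, ⟨?_, ?_⟩, isMinOn_pivotObjective_smul ha hpos hmin⟩
  · simpa [ha] using (Real.sqrt_pos.2 hpos).ne'
  · exact (Function.support_const_smul_subset _ _).trans haC

end PivotProblem

section GraphModel

variable {n : ℕ} {G : SimpleGraph (Fin n)}

lemma mlObjective_addPivot {S K : Matrix (Fin n) (Fin n) ℝ} {v : Fin n} {b : Fin n → ℝ}
    (hK : K.PosDef) (hv : K.row v = Pi.single v 1) (hb : b v ≠ 0) :
    mlObjective S (addPivot v b K) = mlObjective S K - S v v + pivotObjective S v b := by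
  have hsymm : K.IsSymm := isHermitian_iff_isSymm.1 hK.isHermitian
  rw [mlObjective, det_addPivot b hsymm hv, Real.log_mul (pow_ne_zero 2 hb) hK.det_pos.ne',
    addPivot, mul_add, mul_sub, trace_add, trace_sub, trace_mul_vecMulVec, trace_mul_vecMulVec,
    mlObjective, pivotObjective]
  simp only [mulVec_single_one, col_apply, single_one_dotProduct]
  ring

/-- The matrices in the Gaussian graphical model of `G` that agree with the identity matrix in the
rows (hence also in the columns) outside `s`, i.e. the model of the subgraph of `G` induced on `s`
padded by an identity block. -/
def graphModelOn (G : SimpleGraph (Fin n)) (s : Set (Fin n)) : Set (Matrix (Fin n) (Fin n) ℝ) :=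
  {K ∈ graphModel n G | ∀ i ∉ s, K.row i = Pi.single i 1}

lemma graphModelOn_univ : graphModelOn G Set.univ = graphModel n G := by
  simp [graphModelOn]

lemma eq_one_of_mem_graphModelOn_empty {K : Matrix (Fin n) (Fin n) ℝ}
    (hK : K ∈ graphModelOn G ∅) : K = 1 := by
  ext i j
  rw [← K.row_apply i j, hK.2 i (Set.notMem_empty i), one_eq_pi_single]

lemma one_mem_graphModelOn (s : Set (Fin n)) : 1 ∈ graphModelOn G s :=
  ⟨⟨.one, fun _ _ hij _ => one_apply_ne hij⟩, fun i _ => by ext j; simp [one_eq_pi_single]⟩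

lemma addPivot_mem_graphModelOn_iff {s : Set (Fin n)} {v : Fin n} {b : Fin n → ℝ}
    {K : Matrix (Fin n) (Fin n) ℝ} (hb : b v ≠ 0) (hbG : G.IsClique (Function.support b))
    (hbs : Function.support b ⊆ s) (hK : K.IsSymm) (hv : K.row v = Pi.single v 1) :
    addPivot v b K ∈ graphModelOn G s ↔ K ∈ graphModelOn G (s \ {v}) := by
  have hrow : ∀ i ∉ s, (addPivot v b K).row i = K.row i := fun i hi =>
    addPivot_row_of_apply_eq_zero (ne_of_mem_of_not_mem (hbs hb) hi).symm
      (Function.notMem_support.1 fun h => hi (hbs h))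
  refine and_congr (and_congr (posDef_addPivot_iff hb hK hv) ?_) ?_
  · refine forall₄_congr fun i j hij hadj => ?_
    rw [addPivot_apply_of_isClique hbG hij hadj]
  · constructor
    · intro h i hi
      by_cases hiv : i = v
      · exact hiv ▸ hv
      · have his : i ∉ s := fun his => hi ⟨his, hiv⟩
        rw [← hrow i his, h i his]
    · intro h i hi
      rw [hrow i hi, h i fun hi' => hi hi'.1]

lemma support_row_subset {s : Set (Fin n)} {K : Matrix (Fin n) (Fin n) ℝ}
    (hK : K ∈ graphModelOn G s) (v : Fin n) :
    Function.support (K.row v) ⊆ insert v (s ∩ G.neighborSet v) := by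
  intro j hj
  by_contra! hmem
  obtain ⟨hjv, hnot⟩ := not_or.1 hmem
  by_cases hjs : j ∈ s
  · exact hj (hK.1.2 v j (Ne.symm hjv) fun hadj => hnot ⟨hjs, hadj⟩)
  · have hsymm : K.IsSymm := isHermitian_iff_isSymm.1 hK.1.1.isHermitian
    have hjv_row : K.row j v = 0 := by rw [hK.2 j hjs, Pi.single_eq_of_ne (Ne.symm hjv)]
    exact hj ((hsymm.apply j v).trans hjv_row)

/-- Eliminating a simplicial vertex causes no fill-in. -/
lemma graphModelOn_eq_image2_addPivot {s : Set (Fin n)} {v : Fin n} (hv : v ∈ s)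
    (hsimp : IsSimplicialIn G s v) :
    graphModelOn G s = Set.image2 (addPivot v) (pivotColumns (insert v (s ∩ G.neighborSet v)) v)
      (graphModelOn G (s \ {v})) := by
  have hCs : insert v (s ∩ G.neighborSet v) ⊆ s := Set.insert_subset hv Set.inter_subset_left
  have mem_iff : ∀ b ∈ pivotColumns (insert v (s ∩ G.neighborSet v)) v,
      ∀ K : Matrix (Fin n) (Fin n) ℝ, K.IsSymm → K.row v = Pi.single v 1 →
        (addPivot v b K ∈ graphModelOn G s ↔ K ∈ graphModelOn G (s \ {v})) :=
    fun b hb K => addPivot_mem_graphModelOn_iff hb.1 (hsimp.isClique_insert.subset hb.2)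
      (hb.2.trans hCs)
  ext K
  constructor
  · intro hK
    obtain ⟨K₀, hK₀, hrow, heq⟩ := exists_eq_addPivot hK.1.1 v
    have hvv : 0 < √(K v v) := Real.sqrt_pos.2 hK.1.1.diag_pos
    have hb : (√(K v v))⁻¹ • K.row v ∈ pivotColumns (insert v (s ∩ G.neighborSet v)) v := by
      refine ⟨?_, (Function.support_const_smul_subset _ _).trans (support_row_subset hK v)⟩
      simpa using ⟨hvv.ne', hK.1.1.diag_pos.ne'⟩
    exact ⟨_, hb, K₀, (mem_iff _ hb K₀ (isHermitian_iff_isSymm.1 hK₀.isHermitian) hrow).1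
      (heq ▸ hK), heq.symm⟩
  · rintro ⟨b, hb, K₀, hK₀, rfl⟩
    exact (mem_iff b hb K₀ (isHermitian_iff_isSymm.1 hK₀.1.1.isHermitian) (hK₀.2 v (by simp))).2 hK₀

lemma exists_isMinOn_graphModelOn (hG : IsChordal G) {S : Matrix (Fin n) (Fin n) ℝ}
    (hS : ∀ C, G.IsClique C → ∀ v ∈ C,
      ∃ b ∈ pivotColumns C v, IsMinOn (pivotObjective S v) (pivotColumns C v) b)
    (s : Set (Fin n)) :
    ∃ K ∈ graphModelOn G s, IsMinOn (mlObjective S) (graphModelOn G s) K := by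
  induction s using WellFoundedLT.induction with
  | _ s ih =>
  rcases s.eq_empty_or_nonempty with rfl | hne
  · refine ⟨1, one_mem_graphModelOn ∅, fun K hK => ?_⟩
    simp [eq_one_of_mem_graphModelOn_empty hK]
  obtain ⟨v, hv, hsimp⟩ := hG.exists_isSimplicialIn s.toFinite hne
  obtain ⟨K, hK, hKmin⟩ := ih (s \ {v}) (Set.sdiff_singleton_ssubset.2 hv)
  obtain ⟨b, hb, hbmin⟩ := hS _ hsimp.isClique_insert v (Set.mem_insert _ _)
  have mlObjective_eq : ∀ b ∈ pivotColumns (insert v (s ∩ G.neighborSet v)) v,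
      ∀ K ∈ graphModelOn G (s \ {v}),
        mlObjective S (addPivot v b K) = mlObjective S K - S v v + pivotObjective S v b :=
    fun b hb K hK => mlObjective_addPivot hK.1.1 (hK.2 v (by simp)) hb.1
  rw [graphModelOn_eq_image2_addPivot hv hsimp]
  refine ⟨_, Set.mem_image2_of_mem hb hK, ?_⟩
  rintro _ ⟨b', hb', K', hK', rfl⟩
  change mlObjective S _ ≤ mlObjective S _
  rw [mlObjective_eq b hb K hK, mlObjective_eq b' hb' K' hK']
  gcongr
  exacts [hKmin hK', hbmin hb']

lemma not_isMinOn_mlObjective {S : Matrix (Fin n) (Fin n) ℝ} {a : Fin n → ℝ} (ha : a ≠ 0)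
    (haG : G.IsClique (Function.support a)) (haS : S *ᵥ a = 0)
    {K : Matrix (Fin n) (Fin n) ℝ} (hK : K ∈ graphModel n G) :
    ¬ IsMinOn (mlObjective S) (graphModel n G) K := by
  have hmem : K + vecMulVec a a ∈ graphModel n G := by
    refine ⟨hK.1.add_posSemidef (by simpa using posSemidef_vecMulVec_self_star a), ?_⟩
    intro i j hij hadj
    rw [Matrix.add_apply, hK.2 i j hij hadj, vecMulVec_self_eq_zero_of_isClique haG hij hadj,
      add_zero]
  have hlog := Real.log_lt_log hK.1.det_pos (det_lt_det_add_vecMulVec_self hK.1 ha)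
  intro hmin
  have hle : mlObjective S K ≤ mlObjective S (K + vecMulVec a a) := hmin hmem
  rw [mlObjective, mlObjective, mul_add, trace_add, trace_mul_vecMulVec, haS,
    dotProduct_zero] at hle
  linarith

theorem exists_isMinOn_mlObjective_iff {κ : Type*} [Fintype κ] (hG : IsChordal G)
    (X : Matrix (Fin n) κ ℝ) :
    (∃ K ∈ graphModel n G, IsMinOn (mlObjective (X * Xᵀ)) (graphModel n G) K) ↔
      ∀ C : Finset (Fin n), G.IsClique C → LinearIndepOn ℝ X.row C := by
  constructor
  · rintro ⟨K, hK, hmin⟩ C hC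
    refine linearIndepOn_row_iff_vecMul.2 fun a haC haX => ?_
    by_contra ha
    refine not_isMinOn_mlObjective ha (hC.subset haC) ?_ hK hmin
    rw [← mulVec_mulVec, mulVec_transpose, haX, mulVec_zero]
  · intro hX
    rw [← graphModelOn_univ]
    refine exists_isMinOn_graphModelOn hG (fun C hC v hv => ?_) Set.univ
    obtain ⟨C, rfl⟩ := C.toFinite.exists_finset_coe
    exact exists_isMinOn_pivotObjective (hX C hC) hv

end GraphModel

/-- For a chordal graph `G` on a nonempty vertex set, the maximum likelihood threshold
equals the clique number. -/
theorem mlt_eq_cliqueNum_of_chordal (n : ℕ) (hn : 0 < n) (G : SimpleGraph (Fin n))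
    (hG : IsChordal G) :
    mlt n (graphModel n G) = G.cliqueNum := by
  have hpos : 0 < G.cliqueNum := by
    have hclique : G.IsClique ({⟨0, hn⟩} : Finset (Fin n)) := by simp
    exact (Finset.card_pos.2 (Finset.singleton_nonempty _)).trans_le hclique.card_le_cliqueNum
  have ae_iff : ∀ d, (∀ᵐ X : Fin n → Fin d → ℝ ∂volume, ∃ K ∈ graphModel n G,
      ∀ K' ∈ graphModel n G, mlObjective (of X * (of X)ᵀ) K ≤ mlObjective (of X * (of X)ᵀ) K') ↔
      G.cliqueNum ≤ d := by
    intro d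
    have hgeneric := ae_forall_isClique_linearIndepOn_iff (volume : Measure (Fin d → ℝ)) G
    rw [Module.finrank_fin_fun] at hgeneric
    rw [← hgeneric]
    exact Filter.eventually_congr (.of_forall fun X => exists_isMinOn_mlObjective_iff hG (of X))
  simp_rw [mlt, ae_iff]
  exact IsLeast.csInf_eq ⟨⟨hpos, le_rfl⟩, fun d hd => hd.2⟩
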